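/- Let d ≥ 1, α ∈ (0,2), T > 0, and let Ψ̃_T(u) = ∫_{|r| ≤ T^{−1/α}} (1 − cos(⟨u,r⟩)) |r|^{−(d+α)} dr for u ∈ ℝ^d. Then there exist constants 0 < c₁ ≤ c₂ < ∞ (depending only on d, α, T) such that c₁ |u|^α ≤ Ψ̃_T(u) ≤ c₂ |u|^α for all u ∈ ℝ^d with |u| ≥ 1. -/

import Mathlib

open MeasureTheory Metric
open scoped RealInnerProductSpace

/-!
Substituting `r ↦ r / |u|` in the integral over the ball of radius `R` gives
`Ψ̃(u) = |u|^α ∫_{|r| ≤ |u| R} (1 - cos⟨e, r⟩) |r|^{-(d+α)} dr`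
with `e = u / |u|`, so it suffices to bound the latter integral above and below, uniformly over
unit vectors `e` and over radii bounded away from `0`. Above, extend the integral to the whole space
and use that `|r|^{-(d+α)} dr` is a Lévy measure: it integrates `min(1, |r|²)`, hence also
`1 - cos⟨e, r⟩ ≤ 3 min(1, |r|²)`. Below, restrict the integral to a small ball around a positive
multiple of `e`, on which the integrand is bounded below and whose volume does not depend on `e`.
-/

section Radial

lemma integrableOn_Ioi_min_one_sq_mul_rpow {α : ℝ} (hα : 0 < α) (hα2 : α < 2) :
    IntegrableOn (fun y : ℝ => min 1 (y ^ 2) * y ^ (-1 - α)) (Set.Ioi 0) := by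
  rw [← Set.Ioc_union_Ioi_eq_Ioi zero_le_one]
  refine IntegrableOn.union ?near_zero ?near_infinity
  case near_zero =>
    have hint : IntegrableOn (fun y : ℝ => y ^ (1 - α)) (Set.Ioc 0 1) := by
      rw [← intervalIntegrable_iff_integrableOn_Ioc_of_le zero_le_one]
      exact intervalIntegral.intervalIntegrable_rpow' (by linarith)
    refine hint.congr_fun (fun y hy => ?_) measurableSet_Ioc
    have hsq : min 1 (y ^ 2) = y ^ (2 : ℝ) := by
      rw [Real.rpow_two, min_eq_right (pow_le_one₀ hy.1.le hy.2)]
    simp only [hsq, ← Real.rpow_add hy.1]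
    ring_nf
  case near_infinity =>
    refine (integrableOn_Ioi_rpow_of_lt (by linarith : -1 - α < -1) one_pos).congr_fun
      (fun y hy => ?_) measurableSet_Ioi
    have hsq : min 1 (y ^ 2) = 1 := min_eq_left (one_le_pow₀ (Set.mem_Ioi.1 hy).le)
    simp only [hsq, one_mul]

variable {E : Type*} [NormedAddCommGroup E] [NormedSpace ℝ E] [FiniteDimensional ℝ E]
  [MeasurableSpace E] [BorelSpace E]

lemma integrable_min_one_norm_sq_div_norm_rpow (μ : Measure E) [μ.IsAddHaarMeasure]
    {α : ℝ} (hα : 0 < α) (hα2 : α < 2) :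
    Integrable (fun x : E => min 1 (‖x‖ ^ 2) / ‖x‖ ^ ((Module.finrank ℝ E : ℝ) + α)) μ := by
  obtain _ | _ := subsingleton_or_nontrivial E
  · simp [Subsingleton.elim _ (0 : E)]
  refine (integrable_fun_norm_addHaar μ
    (f := fun y : ℝ => min 1 (y ^ 2) / y ^ ((Module.finrank ℝ E : ℝ) + α))).2 ?_
  refine (integrableOn_Ioi_min_one_sq_mul_rpow hα hα2).congr_fun (fun y hy => ?_) measurableSet_Ioi
  have hpow : y ^ (-1 - α) =
      y ^ (Module.finrank ℝ E - 1) / y ^ ((Module.finrank ℝ E : ℝ) + α) := by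
    rw [← Real.rpow_natCast, Nat.cast_pred Module.finrank_pos, ← Real.rpow_sub hy]
    ring_nf
  simp only [hpow, smul_eq_mul]
  ring

end Radial

section StableExponent

variable {E : Type*} [NormedAddCommGroup E] [InnerProductSpace ℝ E]

/-- The integrand `(1 - cos ⟨u, r⟩) |r|^{-(d+α)}`, with `d = dim E`, of the characteristic exponent
of the rotation-invariant `α`-stable law on `E`. -/
noncomputable def stableIntegrand (α : ℝ) (u r : E) : ℝ :=
  (1 - Real.cos ⟪u, r⟫) / ‖r‖ ^ ((Module.finrank ℝ E : ℝ) + α)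

/-- The characteristic exponent `∫_{|r| ≤ R} (1 - cos ⟨u, r⟩) |r|^{-(d+α)} μ(dr)` of the
`α`-stable law whose jumps are truncated at size `R`; the paper's `Ψ̃_T` is the case where `μ` is
the Lebesgue measure and `R = T^{-1/α}`. -/
noncomputable def truncatedStableExponent [MeasurableSpace E] (μ : Measure E) (α R : ℝ) (u : E) :
    ℝ :=
  ∫ r in closedBall 0 R, stableIntegrand α u r ∂μ

lemma stableIntegrand_nonneg (α : ℝ) (u r : E) : 0 ≤ stableIntegrand α u r :=
  div_nonneg (sub_nonneg.2 (Real.cos_le_one _)) (by positivity)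

lemma stableIntegrand_smul_right (α : ℝ) {c : ℝ} (hc : 0 < c) (u r : E) :
    stableIntegrand α u (c • r) =
      (c ^ ((Module.finrank ℝ E : ℝ) + α))⁻¹ * stableIntegrand α (c • u) r := by
  simp only [stableIntegrand, real_inner_smul_left, real_inner_smul_right, norm_smul,
    Real.norm_of_nonneg hc.le, Real.mul_rpow hc.le (norm_nonneg r)]
  ring

lemma one_sub_cos_inner_le (u r : E) :
    1 - Real.cos ⟪u, r⟫ ≤ (2 + ‖u‖ ^ 2) * min 1 (‖r‖ ^ 2) := by
  obtain ⟨hmin, -⟩ | ⟨hmin, -⟩ := min_cases 1 (‖r‖ ^ 2) <;> rw [hmin]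
  · linarith [Real.neg_one_le_cos ⟪u, r⟫, sq_nonneg ‖u‖]
  · have hinner : ⟪u, r⟫ ^ 2 ≤ ‖u‖ ^ 2 * ‖r‖ ^ 2 := by
      rw [← mul_pow, ← sq_abs]
      gcongr
      exact abs_real_inner_le_norm u r
    linarith [Real.one_sub_sq_div_two_le_cos (x := ⟪u, r⟫), sq_nonneg ‖r‖, sq_nonneg ⟪u, r⟫]

lemma stableIntegrand_le (α : ℝ) (u r : E) :
    stableIntegrand α u r ≤
      (2 + ‖u‖ ^ 2) * (min 1 (‖r‖ ^ 2) / ‖r‖ ^ ((Module.finrank ℝ E : ℝ) + α)) := by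
  rw [stableIntegrand, ← mul_div_assoc]
  gcongr
  exact one_sub_cos_inner_le u r

lemma le_stableIntegrand {α a ρ : ℝ} (hα : 0 ≤ α) (ha : 0 < a) (hρ : ρ ≤ Real.pi) {e r : E}
    (he : ‖e‖ = 1) (har : a ≤ ⟪e, r⟫) (hr : ‖r‖ ≤ ρ) :
    2 / Real.pi ^ 2 * a ^ 2 / ρ ^ ((Module.finrank ℝ E : ℝ) + α) ≤ stableIntegrand α e r := by
  have hinner : ⟪e, r⟫ ≤ ‖r‖ := by simpa only [he, one_mul] using real_inner_le_norm e r
  have hr_pos : 0 < ‖r‖ := by linarith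
  have hcos : 2 / Real.pi ^ 2 * ⟪e, r⟫ ^ 2 ≤ 1 - Real.cos ⟪e, r⟫ := by
    have := Real.cos_le_one_sub_mul_cos_sq (x := ⟪e, r⟫)
      (abs_le.2 ⟨by linarith [Real.pi_pos], by linarith⟩)
    linarith
  calc 2 / Real.pi ^ 2 * a ^ 2 / ρ ^ ((Module.finrank ℝ E : ℝ) + α)
      ≤ 2 / Real.pi ^ 2 * ⟪e, r⟫ ^ 2 / ‖r‖ ^ ((Module.finrank ℝ E : ℝ) + α) := by gcongr
    _ ≤ stableIntegrand α e r := by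
      rw [stableIntegrand]
      gcongr

lemma sub_le_inner_of_mem_closedBall_smul {e x : E} (he : ‖e‖ = 1) {t δ : ℝ}
    (hx : x ∈ closedBall (t • e) δ) : t - δ ≤ ⟪e, x⟫ := by
  rw [mem_closedBall_iff_norm'] at hx
  have hsplit : ⟪e, t • e - x⟫ = t - ⟪e, x⟫ := by
    rw [inner_sub_right, real_inner_smul_right, real_inner_self_eq_norm_sq, he]
    ring
  have hcs := real_inner_le_norm e (t • e - x)
  rw [hsplit, he, one_mul] at hcs
  linarith

variable [FiniteDimensional ℝ E] [MeasurableSpace E] [BorelSpace E]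
  (μ : Measure E) [μ.IsAddHaarMeasure] {α : ℝ}

lemma truncatedStableExponent_smul (α : ℝ) {R c : ℝ} (hR : 0 ≤ R) (hc : 0 < c) (u : E) :
    truncatedStableExponent μ α R (c • u) = truncatedStableExponent μ α (c * R) u * c ^ α := by
  have hsubst := μ.setIntegral_comp_smul_of_pos (stableIntegrand α u) (closedBall 0 R) hc
  simp only [stableIntegrand_smul_right α hc, integral_const_mul, smul_closedBall _ _ hR, smul_zero,
    Real.norm_of_nonneg hc.le, smul_eq_mul, Real.rpow_add hc, Real.rpow_natCast] at hsubst
  unfold truncatedStableExponent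
  field_simp at hsubst
  linarith

lemma integrable_stableIntegrand (hα : 0 < α) (hα2 : α < 2) (u : E) :
    Integrable (stableIntegrand α u) μ := by
  refine ((integrable_min_one_norm_sq_div_norm_rpow μ hα hα2).const_mul (2 + ‖u‖ ^ 2)).mono' ?_
    (.of_forall fun r => ?_)
  · unfold stableIntegrand
    exact Measurable.aestronglyMeasurable (by fun_prop)
  · rw [Real.norm_of_nonneg (stableIntegrand_nonneg α u r)]
    exact stableIntegrand_le α u r

lemma truncatedStableExponent_le (hα : 0 < α) (hα2 : α < 2) (R : ℝ) (u : E) :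
    truncatedStableExponent μ α R u ≤ (2 + ‖u‖ ^ 2) *
      ∫ r, min 1 (‖r‖ ^ 2) / ‖r‖ ^ ((Module.finrank ℝ E : ℝ) + α) ∂μ := by
  have hint := integrable_stableIntegrand μ hα hα2 u
  calc truncatedStableExponent μ α R u
      ≤ ∫ r, stableIntegrand α u r ∂μ :=
        setIntegral_le_integral hint (.of_forall (stableIntegrand_nonneg α u))
    _ ≤ ∫ r, (2 + ‖u‖ ^ 2) *
          (min 1 (‖r‖ ^ 2) / ‖r‖ ^ ((Module.finrank ℝ E : ℝ) + α)) ∂μ :=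
        integral_mono hint
          ((integrable_min_one_norm_sq_div_norm_rpow μ hα hα2).const_mul _) (stableIntegrand_le α u)
    _ = _ := integral_const_mul _ _

lemma setIntegral_stableIntegrand_le_truncatedStableExponent (hα : 0 < α) (hα2 : α < 2) {s : Set E}
    {R : ℝ} (hs : s ⊆ closedBall 0 R) (u : E) :
    ∫ r in s, stableIntegrand α u r ∂μ ≤ truncatedStableExponent μ α R u :=
  setIntegral_mono_set (integrable_stableIntegrand μ hα hα2 u).integrableOn
    (.of_forall (stableIntegrand_nonneg α u)) hs.eventuallyLE

lemma mul_measureReal_closedBall_le_truncatedStableExponent (hα : 0 < α) (hα2 : α < 2)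
    {ρ R : ℝ} (hρ : 0 < ρ) (hρR : ρ ≤ R) (hρπ : ρ ≤ Real.pi) {e : E} (he : ‖e‖ = 1) :
    2 / Real.pi ^ 2 * (ρ / 4) ^ 2 / ρ ^ ((Module.finrank ℝ E : ℝ) + α) *
      μ.real (closedBall (0 : E) (ρ / 4)) ≤ truncatedStableExponent μ α R e := by
  have hsub : closedBall ((ρ / 2) • e) (ρ / 4) ⊆ closedBall 0 ρ := by
    refine closedBall_subset_closedBall' ?_
    rw [dist_zero_right, norm_smul, he, mul_one, Real.norm_of_nonneg (by positivity)]
    linarith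
  calc 2 / Real.pi ^ 2 * (ρ / 4) ^ 2 / ρ ^ ((Module.finrank ℝ E : ℝ) + α) *
        μ.real (closedBall (0 : E) (ρ / 4))
      = 2 / Real.pi ^ 2 * (ρ / 4) ^ 2 / ρ ^ ((Module.finrank ℝ E : ℝ) + α) *
        μ.real (closedBall ((ρ / 2) • e) (ρ / 4)) := by
        rw [Measure.addHaar_real_closedBall_center μ ((ρ / 2) • e)]
    _ ≤ ∫ r in closedBall ((ρ / 2) • e) (ρ / 4), stableIntegrand α e r ∂μ := by
        refine setIntegral_ge_of_const_le_real measurableSet_closedBall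
          measure_closedBall_lt_top.ne (fun r hr => ?_)
          (integrable_stableIntegrand μ hα hα2 e).integrableOn
        have hinner := sub_le_inner_of_mem_closedBall_smul he hr
        exact le_stableIntegrand hα.le (by positivity) hρπ he (by linarith)
          (mem_closedBall_zero_iff.1 (hsub hr))
    _ ≤ truncatedStableExponent μ α R e :=
        setIntegral_stableIntegrand_le_truncatedStableExponent μ hα hα2
          (hsub.trans (closedBall_subset_closedBall hρR)) e

lemma exists_pos_forall_le_truncatedStableExponent (hα : 0 < α) (hα2 : α < 2) {R₀ : ℝ}
    (hR₀ : 0 < R₀) :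
    ∃ c, 0 < c ∧ ∀ R, R₀ ≤ R → ∀ e : E, ‖e‖ = 1 → c ≤ truncatedStableExponent μ α R e := by
  have hρ : 0 < min R₀ Real.pi := lt_min hR₀ Real.pi_pos
  have hvol : 0 < μ.real (closedBall (0 : E) (min R₀ Real.pi / 4)) :=
    ENNReal.toReal_pos (measure_closedBall_pos _ _ (by positivity)).ne'
      measure_closedBall_lt_top.ne
  exact ⟨_, by positivity, fun R hR e he =>
    mul_measureReal_closedBall_le_truncatedStableExponent μ hα hα2 hρ
      ((min_le_left _ _).trans hR) (min_le_right _ _) he⟩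

theorem stmt_1_general (hα : 0 < α) (hα2 : α < 2) {R δ : ℝ} (hR : 0 < R) (hδ : 0 < δ) :
    ∃ c₁ c₂ : ℝ, 0 < c₁ ∧ c₁ ≤ c₂ ∧ ∀ u : E, δ ≤ ‖u‖ →
      c₁ * ‖u‖ ^ α ≤ truncatedStableExponent μ α R u ∧
        truncatedStableExponent μ α R u ≤ c₂ * ‖u‖ ^ α := by
  obtain ⟨c, hc, hlower⟩ :=
    exists_pos_forall_le_truncatedStableExponent μ hα hα2 (mul_pos hδ hR)
  set C := (2 + 1 ^ 2) * ∫ r, min 1 (‖r‖ ^ 2) / ‖r‖ ^ ((Module.finrank ℝ E : ℝ) + α) ∂μ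
  refine ⟨c, max c C, hc, le_max_left _ _, fun u hu => ?_⟩
  have hu_pos : 0 < ‖u‖ := hδ.trans_le hu
  obtain ⟨e, he, hue⟩ : ∃ e : E, ‖e‖ = 1 ∧ ‖u‖ • e = u :=
    ⟨‖u‖⁻¹ • u, norm_smul_inv_norm (norm_pos_iff.1 hu_pos), smul_inv_smul₀ hu_pos.ne' u⟩
  have hscale : truncatedStableExponent μ α R u =
      truncatedStableExponent μ α (‖u‖ * R) e * ‖u‖ ^ α := by
    rw [← truncatedStableExponent_smul μ α hR.le hu_pos, hue]
  have hupper : truncatedStableExponent μ α (‖u‖ * R) e ≤ C := by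
    simpa only [he] using truncatedStableExponent_le μ hα hα2 (‖u‖ * R) e
  rw [hscale]
  constructor <;> gcongr
  · exact hlower _ (by gcongr) e he
  · exact hupper.trans (le_max_right _ _)

end StableExponent

/-- Two-sided bound `c₁|u|^α ≤ Ψ̃_T(u) ≤ c₂|u|^α` for `|u| ≥ 1`. -/
theorem stmt_1 (d : ℕ) (hd : 1 ≤ d) (α : ℝ) (hα : 0 < α) (hα2 : α < 2)
    (T : ℝ) (hT : 0 < T)
    (Ψt : EuclideanSpace ℝ (Fin d) → ℝ)
    (hΨt : ∀ u, Ψt u =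
      ∫ r in Metric.closedBall (0 : EuclideanSpace ℝ (Fin d)) (T ^ (-(1 / α))),
        (1 - Real.cos ⟪u, r⟫) / ‖r‖ ^ ((d : ℝ) + α)) :
    ∃ c₁ c₂ : ℝ, 0 < c₁ ∧ c₁ ≤ c₂ ∧
      ∀ u : EuclideanSpace ℝ (Fin d), 1 ≤ ‖u‖ →
        c₁ * ‖u‖ ^ α ≤ Ψt u ∧ Ψt u ≤ c₂ * ‖u‖ ^ α := by
  simpa only [truncatedStableExponent, stableIntegrand, finrank_euclideanSpace_fin, ← hΨt] using
    stmt_1_general (E := EuclideanSpace ℝ (Fin d)) volume hα hα2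
      (Real.rpow_pos_of_pos hT (-(1 / α))) one_pos
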